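/- Idempotents commute in 𝒫_λ(θ,S) if and only if idempotents commute in the monoid S. -/

import Mathlib

open scoped Classical

inductive PBR (Λ S : Type*) : Type _ where
  | zero : PBR Λ S
  | elt : S → List Λ → List Λ → PBR Λ S

namespace PBR

/-- Multiplication on the λ-polycyclic Bruck–Reilly extension `𝒫_λ(θ,S)`. -/
noncomputable def mul {Λ S : Type*} [Monoid S] (θ : S →* S) :
    PBR Λ S → PBR Λ S → PBR Λ S
  | zero, _ => zero
  | elt _ _ _, zero => zero
  | elt s a₁ a₂, elt t b₁ b₂ =>
    if h : ∃ u : List Λ, b₁ = u ++ a₂ then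
      elt ((⇑θ)^[h.choose.length] s * t) (h.choose ++ a₁) b₂
    else if h' : ∃ v : List Λ, a₂ = v ++ b₁ then
      elt (s * (⇑θ)^[h'.choose.length] t) a₁ (h'.choose ++ b₂)
    else zero

end PBR

namespace PBR

variable {Λ S : Type*} [Monoid S] (θ : S →* S)

theorem mul_elt_append_left (s t : S) (a₁ a₂ b₂ u : List Λ) :
    mul θ (elt s a₁ a₂) (elt t (u ++ a₂) b₂) =
      elt ((⇑θ)^[u.length] s * t) (u ++ a₁) b₂ := by
  have h : ∃ w : List Λ, u ++ a₂ = w ++ a₂ := ⟨u, rfl⟩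
  have hu : h.choose = u := (List.append_cancel_right h.choose_spec).symm
  rw [mul, dif_pos h, hu]

theorem mul_elt_append_right (s t : S) (a₁ b₁ b₂ v : List Λ) :
    mul θ (elt s a₁ (v ++ b₁)) (elt t b₁ b₂) =
      elt (s * (⇑θ)^[v.length] t) a₁ (v ++ b₂) := by
  by_cases hv : v = []
  · subst hv
    simpa using mul_elt_append_left θ s t a₁ b₁ b₂ []
  · have h : ¬ ∃ u : List Λ, b₁ = u ++ (v ++ b₁) := by
      rintro ⟨u, hu⟩
      have hlen := congrArg List.length hu
      have := List.length_pos_of_ne_nil hv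
      simp only [List.length_append] at hlen
      omega
    have h' : ∃ w : List Λ, v ++ b₁ = w ++ b₁ := ⟨v, rfl⟩
    have hw : h'.choose = v := (List.append_cancel_right h'.choose_spec).symm
    rw [mul, dif_neg h, dif_pos h', hw]

theorem mul_elt_of_not_suffix (s t : S) (a₁ a₂ b₁ b₂ : List Λ)
    (h : ¬ ∃ u : List Λ, b₁ = u ++ a₂) (h' : ¬ ∃ v : List Λ, a₂ = v ++ b₁) :
    mul θ (elt s a₁ a₂) (elt t b₁ b₂) = zero := by
  rw [mul, dif_neg h, dif_neg h']

theorem mul_zero (x : PBR Λ S) : mul θ x zero = zero := by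
  cases x <;> rfl

theorem mul_elt_elt_same (s t : S) (a₁ a₂ b₂ : List Λ) :
    mul θ (elt s a₁ a₂) (elt t a₂ b₂) = elt (s * t) a₁ b₂ := by
  simpa using mul_elt_append_left θ s t a₁ a₂ b₂ []

theorem mul_self_elt_iff (s : S) (a b : List Λ) :
    mul θ (elt s a b) (elt s a b) = elt s a b ↔ a = b ∧ s * s = s := by
  refine ⟨fun h => ?_, ?_⟩
  · have hab : a = b := by
      by_cases h₁ : ∃ u : List Λ, a = u ++ b
      · obtain ⟨u, rfl⟩ := h₁
        rw [mul_elt_append_left] at h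
        simp_all
      · by_cases h₂ : ∃ v : List Λ, b = v ++ a
        · obtain ⟨v, rfl⟩ := h₂
          rw [mul_elt_append_right] at h
          simp_all
        · rw [mul_elt_of_not_suffix θ s s a b a b h₁ h₂] at h
          cases h
    subst hab
    rw [mul_elt_elt_same] at h
    exact ⟨rfl, (PBR.elt.inj h).1⟩
  · rintro ⟨rfl, hs⟩
    rw [mul_elt_elt_same, hs]

variable {θ}

theorem iterate_map_eq_one_of_idempotent (hθ : ∀ s : S, IsUnit (θ s)) {e : S}
    (he : e * e = e) {n : ℕ} (hn : n ≠ 0) : (⇑θ)^[n] e = 1 := by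
  have h1 : θ e = 1 := by
    apply (hθ e).mul_left_cancel
    rw [← map_mul, he, mul_one]
  obtain ⟨m, rfl⟩ := Nat.exists_eq_succ_of_ne_zero hn
  rw [Function.iterate_succ_apply, h1, iterate_map_one]

theorem mul_comm_of_suffix (hθ : ∀ s : S, IsUnit (θ s))
    (hS : ∀ e f : S, e * e = e → f * f = f → e * f = f * e) {e f : S}
    (he : e * e = e) (hf : f * f = f) (a u : List Λ) :
    mul θ (elt e a a) (elt f (u ++ a) (u ++ a)) =
      mul θ (elt f (u ++ a) (u ++ a)) (elt e a a) := by
  rw [mul_elt_append_left, mul_elt_append_right]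
  by_cases hu : u = []
  · simp [hu, hS e f he hf]
  · rw [iterate_map_eq_one_of_idempotent hθ he (by simpa using hu), one_mul, mul_one]

end PBR

/-- idempotents commute in `𝒫_λ(θ,S)` iff idempotents commute in `S`. -/
theorem pbr_idempotents_commute_iff {Λ S : Type*} [Monoid S] (θ : S →* S)
    (hθ : ∀ s : S, IsUnit (θ s)) :
    (∀ e f : PBR Λ S, PBR.mul θ e e = e → PBR.mul θ f f = f →
        PBR.mul θ e f = PBR.mul θ f e) ↔
      (∀ e f : S, e * e = e → f * f = f → e * f = f * e) := by
  constructor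
  · intro h e f he hf
    have := h (.elt e [] []) (.elt f [] [])
      ((PBR.mul_self_elt_iff θ e [] []).2 ⟨rfl, he⟩)
      ((PBR.mul_self_elt_iff θ f [] []).2 ⟨rfl, hf⟩)
    rw [PBR.mul_elt_elt_same, PBR.mul_elt_elt_same] at this
    exact (PBR.elt.inj this).1
  · rintro hS (_ | ⟨s, a, a'⟩) (_ | ⟨t, b, b'⟩) he hf
    · rfl
    · rw [PBR.mul_zero]; rfl
    · rw [PBR.mul_zero]; rfl
    · obtain ⟨rfl, hs⟩ := (PBR.mul_self_elt_iff θ s a a').1 he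
      obtain ⟨rfl, ht⟩ := (PBR.mul_self_elt_iff θ t b b').1 hf
      by_cases h₁ : ∃ u : List Λ, b = u ++ a
      · obtain ⟨u, rfl⟩ := h₁
        exact PBR.mul_comm_of_suffix hθ hS hs ht a u
      · by_cases h₂ : ∃ v : List Λ, a = v ++ b
        · obtain ⟨v, rfl⟩ := h₂
          exact (PBR.mul_comm_of_suffix hθ hS ht hs b v).symm
        · rw [PBR.mul_elt_of_not_suffix θ s t a a b b h₁ h₂,
            PBR.mul_elt_of_not_suffix θ t s b b a a h₂ h₁]
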